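/- Dragon tail to blue cycle via binary search: suppose the board contains a dragon tail of length m > k ≥ 3 whose first blue edge is u₀u₁. Then within fewer than log₂ m + 8 rounds Builder can force a red C_k or a blue cycle on more than m − k but at most m + 1 vertices of the dragon tail, which moreover contains the edge u₀u₁. -/

import Mathlib

open SimpleGraph

/-- A board state: the set of red edges and the set of blue edges. -/
abbrev Board : Type := Set (Sym2 ℕ) × Set (Sym2 ℕ)

/-- The set of already colored edges of a board. -/
def Board.colored (B : Board) : Set (Sym2 ℕ) := B.1 ∪ B.2

/-- A Builder strategy selects an edge given the current board. -/
abbrev BuilderStrat : Type := Board → Sym2 ℕ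

/-- A Painter strategy colors the selected edge (true = red, false = blue). -/
abbrev PainterStrat : Type := Board → Sym2 ℕ → Bool

/-- The board after `t` rounds of play from `init`. -/
def playGame (b : BuilderStrat) (p : PainterStrat) (init : Board) : ℕ → Board
  | 0 => init
  | t + 1 =>
      let B := playGame b p init t
      let e := b B
      if p B e then (insert e B.1, B.2) else (B.1, insert e B.2)

/-- Builder's strategy is valid from `init`: along any play it always selects a
previously unselected non-loop edge. -/
def ValidFrom (b : BuilderStrat) (init : Board) : Prop :=
  ∀ p : PainterStrat, ∀ t : ℕ,
    ¬ (b (playGame b p init t)).IsDiag ∧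
      b (playGame b p init t) ∉ (playGame b p init t).colored

/-- Builder can force the winning condition `W` within `t` rounds, starting from `init`. -/
def BuilderWinsIn (init : Board) (W : Board → Prop) (t : ℕ) : Prop :=
  ∃ b : BuilderStrat, ValidFrom b init ∧
    ∀ p : PainterStrat, ∃ s, s ≤ t ∧ W (playGame b p init s)

/-- `G` contains a copy of `H`. -/
def HasCopy {α β : Type} (H : SimpleGraph α) (G : SimpleGraph β) : Prop :=
  ∃ f : α ↪ β, ∀ x y, H.Adj x y → G.Adj (f x) (f y)

/-- The red part of the board contains a copy of `H`. -/
def RedCopy {α : Type} (H : SimpleGraph α) (B : Board) : Prop :=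
  HasCopy H (fromEdgeSet B.1)

/-- The blue part of the board contains a copy of `H`. -/
def BlueCopy {α : Type} (H : SimpleGraph α) (B : Board) : Prop :=
  HasCopy H (fromEdgeSet B.2)

/-- The empty board. -/
def emptyBoard : Board := (∅, ∅)

/-- Winning condition: a red `C_k` or a blue `C_n`. -/
def WinCC (k n : ℕ) (B : Board) : Prop :=
  RedCopy (cycleGraph k) B ∨ BlueCopy (cycleGraph n) B

/-- Winning condition: a red `C_k` or a blue path on `n` vertices. -/
def WinCP (k n : ℕ) (B : Board) : Prop :=
  RedCopy (cycleGraph k) B ∨ BlueCopy (pathGraph n) B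

/-- A board consisting of a single blue cycle on the vertices `0, …, m-1`. -/
def blueCycleBoard (m : ℕ) : Board :=
  (∅, {e | ∃ i : ℕ, i < m ∧ e = s(i, (i + 1) % m)})

/-- A board consisting of a single blue path on the vertices `0, …, m-1`. -/
def bluePathBoard (m : ℕ) : Board :=
  (∅, {e | ∃ i : ℕ, i + 1 < m ∧ e = s(i, i + 1)})

/-! Write the red path of the tail as `p 0, p 1, …, p (2 * m)`, so that `u_i = p (2 * i)` and
`w_i = p (2 * i - 1)`. A blue edge from `u_0` to `u_j` with `j ≥ m - k` closes a long blue cycle, so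
Painter has to colour such edges red. For even `k` two of them already close a red `C_k` with the
path `p`. For odd `k` Builder asks `u_0 u_m` (`u_0 u_{m-2}` if `k = 3`), which Painter must colour
red, and `u_0 u_{(k-1)/2}`, which Painter must colour blue since `p 0, …, p (k - 1)` is a red path.
A binary search between the two ends finds `i` with `u_0 u_i` blue and `u_0 u_{i+1}` red. Then at
most four further edges suffice: if they are blue, the blue path makes a detour using `u_0 u_i` that
covers nearly the whole tail, and otherwise the red ones close a red `C_k`. -/

section Game

variable {b b' : BuilderStrat} {q : PainterStrat} {B : Board} {W W' : Board → Prop} {e : Sym2 ℕ}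
  {n n' : ℕ}

theorem playGame_succ_eq_playGame_one (b : BuilderStrat) (q : PainterStrat) (B : Board) (t : ℕ) :
    playGame b q B (t + 1) = playGame b q (playGame b q B 1) t := by
  induction t with
  | zero => rfl
  | succ t ih => rw [playGame, ih]; rfl

theorem playGame_congr (h : ∀ t, b (playGame b' q B t) = b' (playGame b' q B t)) (t : ℕ) :
    playGame b q B t = playGame b' q B t := by
  induction t with
  | zero => rfl
  | succ t ih => simp only [playGame, ih, h]

theorem colored_playGame_succ (b : BuilderStrat) (q : PainterStrat) (B : Board) (t : ℕ) :
    (playGame b q B (t + 1)).colored =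
      insert (b (playGame b q B t)) (playGame b q B t).colored := by
  rw [playGame, Board.colored, Board.colored]
  split_ifs
  · exact Set.insert_union ..
  · exact Set.union_insert ..

theorem finite_colored_playGame (hB : B.colored.Finite) (t : ℕ) :
    (playGame b q B t).colored.Finite := by
  induction t with
  | zero => exact hB
  | succ t ih => exact colored_playGame_succ b q B t ▸ ih.insert _

theorem colored_subset_colored_playGame (t : ℕ) : B.colored ⊆ (playGame b q B t).colored := by
  induction t with
  | zero => rfl
  | succ t ih => exact colored_playGame_succ b q B t ▸ ih.trans (Set.subset_insert _ _)

theorem ValidFrom.mem_red_playGame_iff (hb : ValidFrom b B) (he : e ∈ B.colored) (t : ℕ) :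
    e ∈ (playGame b q B t).1 ↔ e ∈ B.1 := by
  induction t with
  | zero => rfl
  | succ t ih =>
    have hne : e ≠ b (playGame b q B t) := fun h =>
      (hb q t).2 (h ▸ colored_subset_colored_playGame t he)
    rw [← ih, playGame]
    split_ifs
    · exact Set.mem_insert_iff.trans (or_iff_right hne)
    · rfl

theorem exists_legal_move (hB : B.colored.Finite) : ∃ e : Sym2 ℕ, ¬ e.IsDiag ∧ e ∉ B.colored := by
  have hinj : Function.Injective fun n : ℕ => s(0, n + 1) := fun i j h => by simpa using h
  obtain ⟨_, ⟨n, rfl⟩, hn⟩ := (Set.infinite_range_of_injective hinj).exists_notMem_finite hB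
  exact ⟨_, by simp, hn⟩

theorem exists_validFrom (hB : B.colored.Finite) : ∃ b, ValidFrom b B := by
  choose! b hb using fun C : Board => exists_legal_move (B := C)
  exact ⟨b, fun q t => hb _ (finite_colored_playGame hB t)⟩

namespace BuilderWinsIn

theorem of_win (hB : B.colored.Finite) (hW : W B) : BuilderWinsIn B W n :=
  let ⟨b, hb⟩ := exists_validFrom hB
  ⟨b, hb, fun _ => ⟨0, n.zero_le, hW⟩⟩

theorem mono_rounds (h : BuilderWinsIn B W n) (hn : n ≤ n') : BuilderWinsIn B W n' :=
  let ⟨b, hb, hwin⟩ := h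
  ⟨b, hb, fun q => (hwin q).imp fun _ hs => ⟨hs.1.trans hn, hs.2⟩⟩

theorem imp (h : BuilderWinsIn B W n) (hW : ∀ C, W C → W' C) : BuilderWinsIn B W' n :=
  let ⟨b, hb, hwin⟩ := h
  ⟨b, hb, fun q => (hwin q).imp fun _ hs => ⟨hs.1, hW _ hs.2⟩⟩

/-- After the first move `e`, its colour on the current board tells Builder which of the two
strategies to follow. -/
theorem of_insert (hdiag : ¬ e.IsDiag) (hcol : e ∉ B.colored)
    (hred : BuilderWinsIn (insert e B.1, B.2) W n) (hblue : BuilderWinsIn (B.1, insert e B.2) W n) :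
    BuilderWinsIn B W (n + 1) := by
  classical
  obtain ⟨bR, hbR, hwinR⟩ := hred
  obtain ⟨bB, hbB, hwinB⟩ := hblue
  let b : BuilderStrat := fun C => if e ∈ C.colored then if e ∈ C.1 then bR C else bB C else e
  have hb_init : b B = e := if_neg hcol
  have he_red : e ∈ Board.colored (insert e B.1, B.2) := Or.inl (Set.mem_insert e B.1)
  have he_blue : e ∈ Board.colored (B.1, insert e B.2) := Or.inr (Set.mem_insert e B.2)
  have reduce : ∀ q, ∃ b' C, ValidFrom b' C ∧ (∃ s ≤ n, W (playGame b' q C s)) ∧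
      playGame b q B 1 = C ∧ ∀ t, b (playGame b' q C t) = b' (playGame b' q C t) := by
    intro q
    cases hq : q B e
    · refine ⟨bB, _, hbB, hwinB q, by simp [playGame, hb_init, hq], fun t => ?_⟩
      have hnot : e ∉ (playGame bB q (B.1, insert e B.2) t).1 := fun h =>
        hcol (Or.inl ((hbB.mem_red_playGame_iff he_blue t).1 h))
      exact (if_pos (colored_subset_colored_playGame t he_blue)).trans (if_neg hnot)
    · refine ⟨bR, _, hbR, hwinR q, by simp [playGame, hb_init, hq], fun t => ?_⟩
      have hmem : e ∈ (playGame bR q (insert e B.1, B.2) t).1 :=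
        (hbR.mem_red_playGame_iff he_red t).2 (Set.mem_insert e B.1)
      exact (if_pos (colored_subset_colored_playGame t he_red)).trans (if_pos hmem)
  refine ⟨b, fun q t => ?_, fun q => ?_⟩
  · cases t with
    | zero => exact hb_init.symm ▸ ⟨hdiag, hcol⟩
    | succ t =>
      obtain ⟨b', C, hvalid, -, hC, hagree⟩ := reduce q
      rw [playGame_succ_eq_playGame_one, hC, playGame_congr hagree, hagree]
      exact hvalid q t
  · obtain ⟨b', C, -, ⟨s, hs, hW⟩, hC, hagree⟩ := reduce q
    refine ⟨s + 1, by omega, ?_⟩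
    rwa [playGame_succ_eq_playGame_one, hC, playGame_congr hagree]

end BuilderWinsIn

end Game

section Cycles

variable {α V : Type*} {G : SimpleGraph V} {p : α → V} {a : α} {l : List α}

theorem exists_isCycle_support_eq (hlen : 2 ≤ l.length) (hnodup : (a :: l).Nodup)
    (hp : Set.InjOn p {x | x ∈ a :: l})
    (hchain : (a :: (l ++ [a])).IsChain fun x y => G.Adj (p x) (p y)) :
    ∃ c : G.Walk (p a) (p a), c.IsCycle ∧ c.length = l.length + 1 ∧
      c.support = (a :: (l ++ [a])).map p := by
  have hchain' : ((a :: (l ++ [a])).map p).IsChain G.Adj := (List.isChain_map p).2 hchain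
  let c : G.Walk (p a) (p a) := (Walk.ofSupport _ (by simp) hchain').copy (by simp) (by simp)
  have hsupp : c.support = (a :: (l ++ [a])).map p := by simp [c]
  have hlength : c.length = l.length + 1 := by simp [c]
  refine ⟨c, Walk.isCycle_iff_isPath_tail_and_le_length.2 ⟨.mk' ?_, by omega⟩, hlength, hsupp⟩
  rw [Walk.support_tail_of_not_nil _ (Walk.not_nil_iff_lt_length.2 (by omega)), hsupp,
    List.map_cons, List.tail_cons]
  exact ((List.perm_append_singleton a l).nodup_iff.2 hnodup).map_on
    fun x hx y hy => hp (by simpa [or_comm] using hx) (by simpa [or_comm] using hy)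

end Cycles

theorem hasCopy_iff_isContained {α β : Type} {H : SimpleGraph α} {G : SimpleGraph β} :
    HasCopy H G ↔ H ⊑ G :=
  ⟨fun ⟨f, hf⟩ => ⟨⟨⟨f, hf _ _⟩, f.injective⟩⟩,
    fun ⟨f⟩ => ⟨f.toEmbedding, fun _ _ => f.toHom.map_adj⟩⟩

/-- The graph of red edges of a board, so that Mathlib's notions of path and cycle apply. -/
def Board.red (B : Board) : SimpleGraph ℕ := fromEdgeSet B.1

/-- The graph of blue edges of a board, so that Mathlib's notions of path and cycle apply. -/
def Board.blue (B : Board) : SimpleGraph ℕ := fromEdgeSet B.2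

theorem Board.red_mono : Monotone Board.red := fun _ _ h => fromEdgeSet_mono h.1

theorem Board.blue_mono : Monotone Board.blue := fun _ _ h => fromEdgeSet_mono h.2

/-- Builder wins from `B` within `n` rounds whenever `B` has finitely many coloured edges.
Finiteness guarantees that Builder always has a legal move; having it inside the definition keeps it
out of the strategy lemmas. -/
def Forces (W : Board → Prop) (n : ℕ) (B : Board) : Prop :=
  B.colored.Finite → BuilderWinsIn B W n

namespace Forces

variable {W : Board → Prop} {n n' : ℕ} {B : Board}

theorem of_win (h : W B) : Forces W n B := fun hB => .of_win hB h

theorem mono (h : Forces W n B) (hn : n ≤ n') : Forces W n' B := fun hB => (h hB).mono_rounds hn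

theorem ask (x y : ℕ) (hxy : x ≠ y)
    (hred : ∀ C, B ≤ C → C.red.Adj x y → Forces W n C)
    (hblue : ∀ C, B ≤ C → C.blue.Adj x y → Forces W n C) : Forces W (n + 1) B := by
  intro hB
  by_cases hcol : s(x, y) ∈ B.colored
  · rcases hcol with h | h
    · exact (hred B le_rfl ⟨h, hxy⟩).mono n.le_succ hB
    · exact (hblue B le_rfl ⟨h, hxy⟩).mono n.le_succ hB
  · refine .of_insert (by simpa using hxy) hcol (hred _ ⟨Set.subset_insert _ _, le_rfl⟩ ?_ ?_)
      (hblue _ ⟨le_rfl, Set.subset_insert _ _⟩ ?_ ?_)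
    · exact ⟨Set.mem_insert _ _, hxy⟩
    · exact (hB.insert s(x, y)).subset Set.insert_union.subset
    · exact ⟨Set.mem_insert _ _, hxy⟩
    · exact (hB.insert s(x, y)).subset Set.union_insert.subset

theorem binary_search {v lo hi r : ℕ} {x : ℕ → ℕ} (n : ℕ) (hlt : lo < hi) (hlen : hi - lo ≤ 2 ^ n)
    (hv : ∀ i, lo < i → i < hi → v ≠ x i) (hlo : B.blue.Adj v (x lo)) (hhi : B.red.Adj v (x hi))
    (hend : ∀ i, lo ≤ i → i < hi → ∀ C, B ≤ C → C.blue.Adj v (x i) → C.red.Adj v (x (i + 1)) →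
      Forces W r C) : Forces W (r + n) B := by
  induction n generalizing lo hi B with
  | zero =>
    obtain rfl : hi = lo + 1 := by rw [pow_zero] at hlen; omega
    exact hend lo le_rfl hlt B le_rfl hlo hhi
  | succ n ih =>
    by_cases hadj : hi = lo + 1
    · subst hadj
      exact (hend lo le_rfl hlt B le_rfl hlo hhi).mono (by omega)
    rw [pow_succ] at hlen
    obtain ⟨mid, hmid⟩ : ∃ mid, mid = (lo + hi) / 2 := ⟨_, rfl⟩
    refine ask v (x mid) (hv mid (by omega) (by omega)) (fun C hC hred => ?_) fun C hC hblue => ?_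
    · exact ih (by omega) (by omega) (fun i h₁ h₂ => hv i h₁ (by omega))
        (Board.blue_mono hC hlo) hred fun i h₁ h₂ D hD => hend i h₁ (by omega) D (hC.trans hD)
    · exact ih (by omega) (by omega) (fun i h₁ h₂ => hv i (by omega) h₂)
        hblue (Board.red_mono hC hhi) fun i h₁ h₂ D hD => hend i (by omega) h₂ D (hC.trans hD)

end Forces

/-- The board `B` contains a dragon tail of length `m` whose red path is `p 0, p 1, …, p (2 * m)`:
in the usual notation `u_i` is `p (2 * i)` and `w_i` is `p (2 * i - 1)`. -/
structure DragonTail (m : ℕ) (p : ℕ → ℕ) (B : Board) : Prop where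
  injOn : Set.InjOn p (Set.Iic (2 * m))
  red : ∀ j < 2 * m, B.red.Adj (p j) (p (j + 1))
  blue : ∀ j < m, B.blue.Adj (p (2 * j)) (p (2 * (j + 1)))

/-- Builder's goal for the dragon tail with red path `p`: a red `C_k`, or a blue cycle of the
required length on vertices of the tail. That the cycle contains the edge `u₀u₁` is encoded by its
starting with the step from `p 0` to `p 2`. -/
def DragonWin (k m : ℕ) (p : ℕ → ℕ) (B : Board) : Prop :=
  RedCopy (cycleGraph k) B ∨
    ∃ c : B.blue.Walk (p 0) (p 0), c.IsCycle ∧ c.snd = p 2 ∧ m - k < c.length ∧ c.length ≤ m + 1 ∧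
      ∀ v ∈ c.support, ∃ x ≤ 2 * m, p x = v

namespace DragonTail

variable {k m : ℕ} {p : ℕ → ℕ} {B C : Board}

theorem mono (h : DragonTail m p B) (hBC : B ≤ C) : DragonTail m p C :=
  ⟨h.injOn, fun j hj => Board.red_mono hBC (h.red j hj),
    fun j hj => Board.blue_mono hBC (h.blue j hj)⟩

theorem ne (h : DragonTail m p B) {x y : ℕ} (hx : x ≤ 2 * m) (hy : y ≤ 2 * m) (hxy : x ≠ y) :
    p x ≠ p y :=
  h.injOn.ne hx hy hxy

theorem isChain_red (h : DragonTail m p B) {a n : ℕ} (hn : a + n ≤ 2 * m + 1) :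
    (List.range' a n).IsChain fun x y => B.red.Adj (p x) (p y) :=
  (List.isChain_range' a n 1).imp_of_mem_imp fun x y _ hy hxy => by
    subst hxy
    rw [List.mem_range'_1] at hy
    exact h.red x (by omega)

theorem isChain_blue (h : DragonTail m p B) {i n : ℕ} (hn : i + n ≤ m + 1) :
    (List.range' (2 * i) n 2).IsChain fun x y => B.blue.Adj (p x) (p y) :=
  (List.isChain_range' (2 * i) n 2).imp_of_mem_imp fun x y hx hy hxy => by
    subst hxy
    obtain ⟨s, -, rfl⟩ := List.mem_range'.1 hx
    obtain ⟨t, ht, hst⟩ := List.mem_range'.1 hy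
    rw [show 2 * i + 2 * s = 2 * (i + s) by ring]
    exact h.blue (i + s) (by omega)

theorem win_of_red_list (h : DragonTail m p B) {a : ℕ} {l : List ℕ} (hk : 3 ≤ k)
    (hlen : l.length + 1 = k) (hnodup : (a :: l).Nodup) (hle : ∀ x ∈ a :: l, x ≤ 2 * m)
    (hchain : (a :: (l ++ [a])).IsChain fun x y => B.red.Adj (p x) (p y)) : DragonWin k m p B := by
  obtain ⟨c, hc, hlength, -⟩ :=
    exists_isCycle_support_eq (by omega) hnodup (h.injOn.mono hle) hchain
  exact .inl (hasCopy_iff_isContained.2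
    ((cycleGraph_isContained_iff hk).2 ⟨_, c, hc, hlength.trans hlen⟩))

/-- The blue cycle is `u₀, u₁, …, u_j` followed by the vertices of `l`. -/
theorem win_of_blue_extension (h : DragonTail m p B) {j : ℕ} {l : List ℕ} (hj1 : 1 ≤ j)
    (hjm : j ≤ m) (hl : m - k ≤ j + l.length) (hl2 : 2 ≤ j + l.length) (hlm : j + l.length ≤ m)
    (hnodup : l.Nodup) (hmem : ∀ x ∈ l, x ≤ 2 * m ∧ (x % 2 = 1 ∨ 2 * j < x))
    (hchain : (2 * j :: (l ++ [0])).IsChain fun x y => B.blue.Adj (p x) (p y)) :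
    DragonWin k m p B := by
  have hpath : List.range' 0 (j + 1) 2 = 0 :: List.range' 2 j 2 := List.range'_succ
  have hle : ∀ x ∈ 0 :: (List.range' 2 j 2 ++ l), x ≤ 2 * m := by
    simp only [← List.cons_append, ← hpath, List.mem_append, List.mem_range']
    rintro x (⟨i, hi, rfl⟩ | hx)
    exacts [by omega, (hmem x hx).1]
  have hnodup' : (0 :: (List.range' 2 j 2 ++ l)).Nodup := by
    rw [← List.cons_append, ← hpath]
    refine (List.nodup_range' 2).append hnodup fun x hx hx' => ?_
    obtain ⟨i, hi, rfl⟩ := List.mem_range'.1 hx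
    have := (hmem _ hx').2
    omega
  have hclosed : (0 :: ((List.range' 2 j 2 ++ l) ++ [0])).IsChain
      fun x y => B.blue.Adj (p x) (p y) := by
    have hupto : (List.range' 0 (j + 1) 2).IsChain fun x y => B.blue.Adj (p x) (p y) :=
      h.isChain_blue (i := 0) (by omega)
    rw [List.range'_concat, zero_add] at hupto
    rw [List.append_assoc, ← List.cons_append, ← hpath, List.range'_concat, zero_add]
    exact hupto.append_overlap hchain (List.cons_ne_nil _ _)
  obtain ⟨c, hc, hlength, hsupp⟩ := exists_isCycle_support_eq
    (by simpa using hl2) hnodup' (h.injOn.mono hle) hclosed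
  rw [List.length_append, List.length_range'] at hlength
  obtain ⟨i, rfl⟩ := Nat.exists_eq_add_of_le' hj1
  refine .inr ⟨c, hc, ?_, by omega, by omega, fun v hv => ?_⟩
  · rw [Walk.snd, c.getVert_eq_support_getElem (by omega)]
    simp [hsupp, List.range'_succ]
  · rw [hsupp] at hv
    obtain ⟨x, hx, rfl⟩ := List.mem_map.1 hv
    rw [← List.cons_append, List.mem_append, List.mem_singleton] at hx
    exact ⟨x, hx.elim (hle x) fun hx0 => hx0 ▸ Nat.zero_le _, rfl⟩

theorem win_of_red_fan (h : DragonTail m p B) {x a b : ℕ} (hk : 3 ≤ k) (hab : b + 2 = a + k)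
    (hb : b ≤ 2 * m) (hx : x ≤ 2 * m) (hxab : x < a ∨ b < x)
    (ha_red : B.red.Adj (p x) (p a)) (hb_red : B.red.Adj (p x) (p b)) : DragonWin k m p B := by
  obtain ⟨n, rfl⟩ : ∃ n, k = n + 2 := ⟨k - 2, by omega⟩
  obtain rfl : b = a + n := by omega
  refine h.win_of_red_list (a := x) (l := List.range' a (n + 1)) hk (by simp) ?_ ?_ ?_
  · refine List.nodup_cons.2 ⟨?_, List.nodup_range'⟩
    rw [List.mem_range'_1]
    omega
  · simp only [List.mem_cons, List.mem_range'_1]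
    omega
  · refine List.isChain_cons.2 ⟨?_, (h.isChain_red (by omega)).append (.singleton x) ?_⟩
    · simpa [List.range'_succ] using ha_red
    · simpa [List.getLast?_range'] using hb_red.symm

/-- The red cycle `p 0, p b, p (b - 1), …, p a, p c, p (c + 1), …, p d`. -/
theorem win_of_red_two_paths (h : DragonTail m p B) {a b c d : ℕ} (ha : 0 < a) (hab : a ≤ b)
    (hbc : b < c) (hcd : c ≤ d) (hd : d ≤ 2 * m) (hlen : (b - a) + (d - c) + 3 = k)
    (hb_red : B.red.Adj (p 0) (p b)) (hac_red : B.red.Adj (p a) (p c))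
    (hd_red : B.red.Adj (p 0) (p d)) : DragonWin k m p B := by
  obtain ⟨s, rfl⟩ := Nat.exists_eq_add_of_le hab
  obtain ⟨t, rfl⟩ := Nat.exists_eq_add_of_le hcd
  refine h.win_of_red_list (a := 0) (l := (List.range' a (s + 1)).reverse ++ List.range' c (t + 1))
    (by omega) (by grind) ?_ ?_ ?_
  · grind [List.nodup_range', List.nodup_append]
  · grind
  · have hup := h.isChain_red (a := c) (n := t + 1) (by omega)
    have hdown := List.isChain_reverse.2
      ((h.isChain_red (a := a) (n := s + 1) (by omega)).imp fun _ _ e => e.symm)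
    rw [List.append_assoc]
    refine List.isChain_cons.2 ⟨?_, hdown.append (hup.append (.singleton 0) ?_) ?_⟩
    · simpa [List.getLast?_range'] using hb_red
    · simpa [List.getLast?_range'] using hd_red.symm
    · simpa [List.range'_succ] using hac_red

theorem win_of_blue_chord (h : DragonTail m p B) {j : ℕ} (hj2 : 2 ≤ j) (hjm : j ≤ m)
    (hj : m - k ≤ j) (hblue : B.blue.Adj (p 0) (p (2 * j))) : DragonWin k m p B :=
  h.win_of_blue_extension (l := []) (by omega) hjm hj hj2 hjm .nil (by simp)
    (.cons_cons hblue.symm (.singleton 0))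

/-- The blue cycle `u₀, …, u_{i-1}, u_M, u_{M-1}, …, u_i`. -/
theorem win_of_blue_crossing (h : DragonTail m p B) {i M : ℕ} (hi : 1 ≤ i) (hiM : i < M)
    (hMm : M ≤ m) (hM : m - k ≤ M) (h0 : B.blue.Adj (p 0) (p (2 * i)))
    (h1 : B.blue.Adj (p (2 * (i - 1))) (p (2 * M))) : DragonWin k m p B := by
  obtain rfl | hi2 := hi.eq_or_lt
  · exact h.win_of_blue_chord hiM hMm hM h1
  obtain ⟨n, rfl⟩ := Nat.exists_eq_add_of_le hiM.le
  have hdown := List.isChain_reverse.2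
    ((h.isChain_blue (i := i) (n := n + 1) (by omega)).imp fun _ _ e => e.symm)
  have hlen : (List.range' (2 * i) (n + 1) 2).reverse.length = n + 1 := by simp
  refine h.win_of_blue_extension (j := i - 1) (l := (List.range' (2 * i) (n + 1) 2).reverse)
    (by omega) (by omega) (by omega) (by omega) (by omega) ?_ ?_ ?_
  · exact List.nodup_reverse.2 (List.nodup_range' 2)
  · simp only [List.mem_reverse, List.mem_range']
    omega
  · refine List.isChain_cons.2 ⟨?_, hdown.append (.singleton 0) ?_⟩
    · simpa [List.range'_concat, mul_add] using h1
    · simpa [List.range'_succ] using h0.symm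

/-- The blue cycle `u₀, …, u_{i-1}, u_{i+1}, …, u_m, u_i`. -/
theorem win_of_blue_skip (h : DragonTail m p B) {i : ℕ} (hi : 2 ≤ i) (him : i < m)
    (h0 : B.blue.Adj (p 0) (p (2 * i)))
    (h1 : B.blue.Adj (p (2 * (i - 1))) (p (2 * (i + 1))))
    (h2 : B.blue.Adj (p (2 * i)) (p (2 * m))) : DragonWin k m p B := by
  obtain ⟨n, rfl⟩ := Nat.exists_eq_add_of_lt him
  have hup := h.isChain_blue (i := i + 1) (n := n + 1) (by omega)
  have hlen : (List.range' (2 * (i + 1)) (n + 1) 2 ++ [2 * i]).length = n + 2 := by simp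
  refine h.win_of_blue_extension (j := i - 1)
    (l := List.range' (2 * (i + 1)) (n + 1) 2 ++ [2 * i]) (by omega) (by omega) (by omega)
    (by omega) (by omega) ?_ ?_ ?_
  · refine List.nodup_append'.2 ⟨List.nodup_range' 2, List.nodup_singleton _, ?_⟩
    rw [List.disjoint_singleton, List.mem_range']
    omega
  · simp only [List.mem_append, List.mem_range', List.mem_singleton]
    rintro x (⟨j, hj, rfl⟩ | rfl) <;> omega
  · rw [List.append_assoc]
    refine List.isChain_cons.2 ⟨?_, hup.append (.cons_cons h0.symm (.singleton 0)) ?_⟩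
    · simpa [List.range'_succ] using h1
    · have hlast : 2 * (i + 1) + 2 * n = 2 * (i + n + 1) := by ring
      simpa [List.range'_concat, hlast] using h2.symm

/-- The blue cycle `u₀, …, u_M, w_i, w_{i+1}`. -/
theorem win_of_blue_detour (h : DragonTail m p B) {i M : ℕ} (hi : 1 ≤ i) (hiM : i < M)
    (hMm : M + 2 = m) (h0 : B.blue.Adj (p (2 * i - 1)) (p (2 * M)))
    (h1 : B.blue.Adj (p (2 * i - 1)) (p (2 * i + 1))) (h2 : B.blue.Adj (p 0) (p (2 * i + 1))) :
    DragonWin k m p B := by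
  refine h.win_of_blue_extension (j := M) (l := [2 * i - 1, 2 * i + 1]) (by omega) (by omega)
    (by simp; omega) (by simp) (by simp; omega) (by simp) ?_
    (.cons_cons h0.symm (.cons_cons h1 (.cons_cons h2.symm (.singleton 0))))
  simp only [List.mem_cons, List.not_mem_nil, or_false]
  omega

theorem forces_of_even (h : DragonTail m p B) (hk : 3 ≤ k) (hm : k < m) (heven : Even k) :
    Forces (DragonWin k m p) 2 B := by
  obtain ⟨r, rfl⟩ := heven
  refine .ask (p 0) (p (2 * m)) (h.ne (by omega) (by omega) (by omega))
    (fun B₁ h₁ hred₁ => ?_)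
    fun B₁ h₁ hblue₁ => .of_win ((h.mono h₁).win_of_blue_chord (by omega) le_rfl (by omega) hblue₁)
  refine .ask (p 0) (p (2 * (m - (r - 1)))) (h.ne (by omega) (by omega) (by omega))
    (fun B₂ h₂ hred₂ => .of_win ?_) fun B₂ h₂ hblue₂ => .of_win ?_
  · exact (h.mono (h₁.trans h₂)).win_of_red_fan hk (by omega) le_rfl (by omega) (by omega) hred₂
      (Board.red_mono h₂ hred₁)
  · exact (h.mono (h₁.trans h₂)).win_of_blue_chord (by omega) (by omega) (by omega) hblue₂

theorem forces_three_of_blue_path (h : DragonTail m p B) {i M : ℕ} (hM : M + 2 = m) (hi : 1 ≤ i)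
    (hiM : i < M) (h0i : B.blue.Adj (p 0) (p (2 * i)))
    (h0w : B.blue.Adj (p 0) (p (2 * i + 1)))
    (hww : B.blue.Adj (p (2 * i - 1)) (p (2 * i + 1))) : Forces (DragonWin 3 m p) 2 B := by
  refine .ask (p (2 * (i - 1))) (p (2 * M)) (h.ne (by omega) (by omega) (by omega))
    (fun B₁ h₁ hred₁ => ?_) fun B₁ h₁ hblue₁ => .of_win ?_
  · refine .ask (p (2 * i - 1)) (p (2 * M)) (h.ne (by omega) (by omega) (by omega))
      (fun B₂ h₂ hred₂ => .of_win ?_) fun B₂ h₂ hblue₂ => .of_win ?_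
    · exact (h.mono (h₁.trans h₂)).win_of_red_fan le_rfl (by omega) (by omega) (by omega)
        (by omega) (Board.red_mono h₂ hred₁.symm) hred₂.symm
    · have h₁₂ := Board.blue_mono (h₁.trans h₂)
      exact (h.mono (h₁.trans h₂)).win_of_blue_detour hi hiM hM hblue₂ (h₁₂ hww) (h₁₂ h0w)
  · exact (h.mono h₁).win_of_blue_crossing hi hiM (by omega) (by omega)
      (Board.blue_mono h₁ h0i) hblue₁

theorem forces_three_of_switch (h : DragonTail m p B) {i : ℕ} (hi : 1 ≤ i) (him : i + 2 < m)
    (h0i : B.blue.Adj (p 0) (p (2 * i))) (h0j : B.red.Adj (p 0) (p (2 * (i + 1)))) :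
    Forces (DragonWin 3 m p) 4 B := by
  refine .ask (p 0) (p (2 * i + 1)) (h.ne (by omega) (by omega) (by omega))
    (fun B₁ h₁ hred₁ => .of_win ?_) fun B₁ h₁ hblue₁ => ?_
  · exact (h.mono h₁).win_of_red_fan le_rfl (by omega) (by omega) (by omega) (by omega) hred₁
      (Board.red_mono h₁ h0j)
  refine .ask (p (2 * i - 1)) (p (2 * i + 1)) (h.ne (by omega) (by omega) (by omega))
    (fun B₂ h₂ hred₂ => .of_win ?_) fun B₂ h₂ hblue₂ => ?_
  · have tail := h.mono (h₁.trans h₂)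
    exact tail.win_of_red_fan (b := 2 * i) le_rfl (by omega) (by omega) (by omega) (by omega)
      hred₂.symm (tail.red (2 * i) (by omega)).symm
  · exact (h.mono (h₁.trans h₂)).forces_three_of_blue_path (M := m - 2) (by omega) hi (by omega)
      (Board.blue_mono (h₁.trans h₂) h0i) (Board.blue_mono h₂ hblue₁) hblue₂

theorem forces_five_of_switch (h : DragonTail m p B) {i : ℕ} (hi : 2 ≤ i) (him : i + 1 < m)
    (h0i : B.blue.Adj (p 0) (p (2 * i))) (h0j : B.red.Adj (p 0) (p (2 * (i + 1))))
    (h0m : B.red.Adj (p 0) (p (2 * m))) : Forces (DragonWin 5 m p) 2 B := by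
  refine .ask (p (2 * i)) (p (2 * m)) (h.ne (by omega) (by omega) (by omega))
    (fun B₁ h₁ hred₁ => .of_win ?_) fun B₁ h₁ hblue₁ => ?_
  · exact (h.mono h₁).win_of_red_two_paths (by omega) (by omega) (by omega) le_rfl le_rfl
      (by omega) (Board.red_mono h₁ h0j) hred₁ (Board.red_mono h₁ h0m)
  refine .ask (p (2 * (i - 1))) (p (2 * (i + 1)))
    (h.ne (by omega) (by omega) (by omega)) (fun B₂ h₂ hred₂ => .of_win ?_)
    fun B₂ h₂ hblue₂ => .of_win ?_
  · have tail := h.mono (h₁.trans h₂)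
    exact tail.win_of_red_fan (a := 2 * (i - 1)) (b := 2 * i + 1) (by omega) (by omega)
      (by omega) (by omega) (by omega) hred₂.symm (tail.red (2 * i + 1) (by omega)).symm
  · exact (h.mono (h₁.trans h₂)).win_of_blue_skip hi (by omega)
      (Board.blue_mono (h₁.trans h₂) h0i) hblue₂ (Board.blue_mono h₂ hblue₁)

theorem forces_of_switch_of_seven_le (h : DragonTail m p B) {i r : ℕ} (hr : 3 ≤ r) (hi : 2 ≤ i)
    (him : i + (2 * r + 1) < m) (h0i : B.blue.Adj (p 0) (p (2 * i)))
    (h0j : B.red.Adj (p 0) (p (2 * (i + 1)))) (h0m : B.red.Adj (p 0) (p (2 * m))) :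
    Forces (DragonWin (2 * r + 1) m p) 1 B := by
  refine .ask (p (2 * (i - 1))) (p (2 * (m - (r - 3))))
    (h.ne (by omega) (by omega) (by omega)) (fun B₁ h₁ hred₁ => .of_win ?_)
    fun B₁ h₁ hblue₁ => .of_win ?_
  · exact (h.mono h₁).win_of_red_two_paths (by omega) (by omega) (by omega) (by omega) le_rfl
      (by omega) (Board.red_mono h₁ h0j) hred₁ (Board.red_mono h₁ h0m)
  · exact (h.mono h₁).win_of_blue_crossing (by omega) (by omega) (by omega) (by omega)
      (Board.blue_mono h₁ h0i) hblue₁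

theorem forces_of_forall_switch (h : DragonTail m p B) {r M : ℕ} (hr : 1 ≤ r) (hrM : r < M)
    (hMm : M ≤ m) (hM : m - (2 * r + 1) ≤ M)
    (hswitch : ∀ i C, r ≤ i → i < M → B ≤ C → C.blue.Adj (p 0) (p (2 * i)) →
      C.red.Adj (p 0) (p (2 * (i + 1))) → C.red.Adj (p 0) (p (2 * M)) →
      Forces (DragonWin (2 * r + 1) m p) 4 C) :
    Forces (DragonWin (2 * r + 1) m p) (Nat.log 2 m + 7) B := by
  refine .ask (p 0) (p (2 * M)) (h.ne (by omega) (by omega) (by omega))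
    (fun B₁ h₁ hred₁ => ?_)
    fun B₁ h₁ hblue₁ => .of_win ((h.mono h₁).win_of_blue_chord (by omega) hMm hM hblue₁)
  refine .ask (p 0) (p (2 * r)) (h.ne (by omega) (by omega) (by omega))
    (fun B₂ h₂ hred₂ => .of_win ?_) fun B₂ h₂ hblue₂ => ?_
  · have tail := h.mono (h₁.trans h₂)
    exact tail.win_of_red_fan (a := 1) (by omega) (by omega) (by omega) (by omega) (by omega)
      (tail.red 0 (by omega)) hred₂
  have hlog : M - r ≤ 2 ^ (Nat.log 2 m + 1) :=
    (by omega : M - r ≤ m).trans (Nat.lt_pow_succ_log_self one_lt_two m).le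
  refine (Forces.binary_search (x := fun i => p (2 * i)) (r := 4) (Nat.log 2 m + 1) hrM hlog
    (fun i hri hiM => h.ne (by omega) (by omega) (by omega)) hblue₂ (Board.red_mono h₂ hred₁)
    fun i hri hiM C hC hblue hred => ?_).mono (by omega)
  exact hswitch i C hri hiM (h₁.trans (h₂.trans hC)) hblue hred
    (Board.red_mono (h₂.trans hC) hred₁)

theorem forces_of_odd (h : DragonTail m p B) (hk : 3 ≤ k) (hm : k < m) (hodd : Odd k) :
    Forces (DragonWin k m p) (Nat.log 2 m + 7) B := by
  obtain ⟨r, rfl⟩ := hodd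
  obtain rfl | hr : r = 1 ∨ 2 ≤ r := by omega
  · exact h.forces_of_forall_switch (M := m - 2) le_rfl (by omega) (by omega) (by omega)
      fun i C hi him hC h0i h0j _ => (h.mono hC).forces_three_of_switch hi (by omega) h0i h0j
  refine h.forces_of_forall_switch (M := m) (by omega) (by omega) le_rfl (by omega)
    fun i C hi him hC h0i h0j h0m => ?_
  have tail := h.mono hC
  by_cases hlong : m - (2 * r + 1) ≤ i
  · exact .of_win (tail.win_of_blue_chord (by omega) him.le hlong h0i)
  obtain rfl | hr3 := hr.eq_or_lt
  · exact (tail.forces_five_of_switch hi (by omega) h0i h0j h0m).mono (by omega)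
  · exact (tail.forces_of_switch_of_seven_le hr3 (by omega) (by omega) h0i h0j h0m).mono
      (by omega)

theorem forces_dragonWin (h : DragonTail m p B) (hk : 3 ≤ k) (hm : k < m) :
    Forces (DragonWin k m p) (Nat.log 2 m + 7) B :=
  k.even_or_odd.elim (fun heven => (h.forces_of_even hk hm heven).mono (by omega))
    (h.forces_of_odd hk hm)

end DragonTail

/-- The vertices of the red path `u₀, w₁, u₁, w₂, …` of a dragon tail. -/
def zigzag (u w : ℕ → ℕ) (n : ℕ) : ℕ := if n % 2 = 0 then u (n / 2) else w (n / 2 + 1)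

/-- The board holding exactly the edges of the dragon tail of length `m` on `u` and `w`. -/
def dragonTailBoard (m : ℕ) (u w : ℕ → ℕ) : Board :=
  ({e | ∃ i : ℕ, i < m ∧ (e = s(u i, w (i + 1)) ∨ e = s(w (i + 1), u (i + 1)))},
    {e | ∃ i : ℕ, i < m ∧ e = s(u i, u (i + 1))})

section Zigzag

variable {m : ℕ} {u w : ℕ → ℕ}

theorem zigzag_even (u w : ℕ → ℕ) (n : ℕ) : zigzag u w (2 * n) = u n := by
  simp [zigzag]

theorem zigzag_odd (u w : ℕ → ℕ) (n : ℕ) : zigzag u w (2 * n + 1) = w (n + 1) := by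
  rw [zigzag, if_neg (by omega), show (2 * n + 1) / 2 = n by omega]

theorem zigzag_injOn (hu : Set.InjOn u (Set.Iic m)) (hw : Set.InjOn w (Set.Icc 1 m))
    (hdisj : ∀ x y, x ≤ m → 1 ≤ y → y ≤ m → u x ≠ w y) :
    Set.InjOn (zigzag u w) (Set.Iic (2 * m)) := by
  intro x hx y hy e
  rw [Set.mem_Iic] at hx hy
  obtain ⟨a, rfl | rfl⟩ := x.even_or_odd' <;> obtain ⟨b, rfl | rfl⟩ := y.even_or_odd' <;>
    simp only [zigzag_even, zigzag_odd] at e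
  · rw [hu (Set.mem_Iic.2 (by omega)) (Set.mem_Iic.2 (by omega)) e]
  · exact absurd e (hdisj a (b + 1) (by omega) (by omega) (by omega))
  · exact absurd e.symm (hdisj b (a + 1) (by omega) (by omega) (by omega))
  · have := hw (Set.mem_Icc.2 ⟨by omega, by omega⟩) (Set.mem_Icc.2 ⟨by omega, by omega⟩) e
    omega

theorem finite_colored_dragonTailBoard (m : ℕ) (u w : ℕ → ℕ) :
    (dragonTailBoard m u w).colored.Finite := by
  refine Set.Finite.subset (s := ⋃ i ∈ Set.Iio m,
    {s(u i, w (i + 1)), s(w (i + 1), u (i + 1)), s(u i, u (i + 1))})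
    ((Set.finite_Iio m).biUnion fun i _ => Set.toFinite _) ?_
  rintro e (⟨i, hi, rfl | rfl⟩ | ⟨i, hi, rfl⟩) <;> exact Set.mem_biUnion hi (by simp)

theorem dragonTail_dragonTailBoard (h : Set.InjOn (zigzag u w) (Set.Iic (2 * m))) :
    DragonTail m (zigzag u w) (dragonTailBoard m u w) := by
  refine ⟨h, fun j hj => ⟨⟨j / 2, by omega, ?_⟩, ?_⟩, fun j hj => ⟨⟨j, hj, ?_⟩, ?_⟩⟩
  · obtain ⟨n, rfl | rfl⟩ := j.even_or_odd'
    · left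
      rw [zigzag_even, zigzag_odd, show 2 * n / 2 = n by omega]
    · right
      rw [show 2 * n + 1 + 1 = 2 * (n + 1) by ring, zigzag_even, zigzag_odd,
        show (2 * n + 1) / 2 = n by omega]
  · exact h.ne (Set.mem_Iic.2 (by omega)) (Set.mem_Iic.2 (by omega)) (by omega)
  · rw [zigzag_even, zigzag_even]
  · exact h.ne (Set.mem_Iic.2 (by omega)) (Set.mem_Iic.2 (by omega)) (by omega)

theorem exists_zigzag_eq {x : ℕ} (hx : x ≤ 2 * m) :
    (∃ i ≤ m, zigzag u w x = u i) ∨ ∃ i, 1 ≤ i ∧ i ≤ m ∧ zigzag u w x = w i := by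
  obtain ⟨n, rfl | rfl⟩ := x.even_or_odd'
  · exact .inl ⟨n, by omega, zigzag_even u w n⟩
  · exact .inr ⟨n + 1, by omega, by omega, zigzag_odd u w n⟩

theorem DragonWin.exists_cyclic_enumeration {k : ℕ} {B : Board}
    (h : DragonWin k m (zigzag u w) B) :
    RedCopy (cycleGraph k) B ∨
      ∃ (ℓ : ℕ) (g : ℕ → ℕ), m - k < ℓ ∧ ℓ ≤ m + 1 ∧
        (∀ a c, a < ℓ → c < ℓ → g a = g c → a = c) ∧
        (∀ j, j + 1 < ℓ → s(g j, g (j + 1)) ∈ B.2) ∧ s(g (ℓ - 1), g 0) ∈ B.2 ∧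
        (∀ a, a < ℓ → (∃ i, i ≤ m ∧ g a = u i) ∨ (∃ i, 1 ≤ i ∧ i ≤ m ∧ g a = w i)) ∧
        (∃ a, a < ℓ ∧ ((g a = u 0 ∧ g ((a + 1) % ℓ) = u 1) ∨
          (g a = u 1 ∧ g ((a + 1) % ℓ) = u 0))) := by
  refine h.imp_right ?_
  rintro ⟨c, hc, hsnd, hlong, hshort, hsupp⟩
  have hlen := hc.three_le_length
  refine ⟨c.length, c.getVert, hlong, hshort, fun a b ha hb => hc.getVert_injOn' ?_ ?_,
    fun j hj => (c.adj_getVert_succ (by omega)).1, ?_, fun a _ => ?_, 0, by omega, .inl ⟨?_, ?_⟩⟩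
  · exact Nat.le_sub_one_of_lt ha
  · exact Nat.le_sub_one_of_lt hb
  · exact c.getVert_zero.symm ▸ (c.adj_penultimate hc.not_nil).1
  · obtain ⟨x, hx, hxa⟩ := hsupp _ (c.getVert_mem_support a)
    exact hxa ▸ exists_zigzag_eq hx
  · exact c.getVert_zero.trans (zigzag_even u w 0)
  · rw [Nat.mod_eq_of_lt (by omega)]
    exact hsnd.trans (zigzag_even u w 1)

end Zigzag

theorem dragon_tail_to_cycle_general {k m : ℕ} {p : ℕ → ℕ} {B : Board} (hk : 3 ≤ k) (hm : k < m)
    (hB : B.colored.Finite) (h : DragonTail m p B) :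
    ∃ t : ℕ, (t : ℝ) < Real.logb 2 m + 8 ∧ BuilderWinsIn B (DragonWin k m p) t := by
  refine ⟨Nat.log 2 m + 7, ?_, h.forces_dragonWin hk hm hB⟩
  have := Real.natLog_le_logb m 2
  push_cast at this ⊢
  linarith

/-- Dragon tail to blue cycle via binary search: starting from a dragon tail of
length `m > k ≥ 3` with first blue edge `u 0 – u 1`, within fewer than `log₂ m + 8`
rounds Builder can force a red `C_k` or a blue cycle on more than `m - k` but at most
`m + 1` vertices of the dragon tail containing the edge `u 0 – u 1`. -/
theorem dragon_tail_to_cycle (k m : ℕ) (hk : 3 ≤ k) (hm : k < m)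
    (u w : ℕ → ℕ)
    (hu : ∀ x y, x ≤ m → y ≤ m → u x = u y → x = y)
    (hw : ∀ x y, 1 ≤ x → x ≤ m → 1 ≤ y → y ≤ m → w x = w y → x = y)
    (hdisj : ∀ x y, x ≤ m → 1 ≤ y → y ≤ m → u x ≠ w y) :
    ∃ t : ℕ, (t : ℝ) < Real.logb 2 m + 8 ∧
      BuilderWinsIn
        ({e | ∃ i : ℕ, i < m ∧
           (e = s(u i, w (i + 1)) ∨ e = s(w (i + 1), u (i + 1)))},
         {e | ∃ i : ℕ, i < m ∧ e = s(u i, u (i + 1))})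
        (fun B => RedCopy (SimpleGraph.cycleGraph k) B ∨
          ∃ (ℓ : ℕ) (g : ℕ → ℕ), m - k < ℓ ∧ ℓ ≤ m + 1 ∧
            (∀ a c, a < ℓ → c < ℓ → g a = g c → a = c) ∧
            (∀ j, j + 1 < ℓ → s(g j, g (j + 1)) ∈ B.2) ∧
            s(g (ℓ - 1), g 0) ∈ B.2 ∧
            (∀ a, a < ℓ → (∃ i, i ≤ m ∧ g a = u i) ∨
              (∃ i, 1 ≤ i ∧ i ≤ m ∧ g a = w i)) ∧
            (∃ a, a < ℓ ∧ ((g a = u 0 ∧ g ((a + 1) % ℓ) = u 1) ∨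
              (g a = u 1 ∧ g ((a + 1) % ℓ) = u 0))))
        t := by
  have hzigzag : Set.InjOn (zigzag u w) (Set.Iic (2 * m)) :=
    zigzag_injOn (fun x hx y hy => hu x y hx hy)
      (fun x hx y hy => hw x y hx.1 hx.2 hy.1 hy.2) hdisj
  obtain ⟨t, ht, hwin⟩ := dragon_tail_to_cycle_general hk hm
    (finite_colored_dragonTailBoard m u w) (dragonTail_dragonTailBoard hzigzag)
  exact ⟨t, ht, hwin.imp fun _ h => h.exists_cyclic_enumeration⟩
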